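/- For any integer n ≥ 2 and any λ ∈ ℝ, there exists ε₁ > 0 with the following property: for every ε with 0 < |ε| ≤ ε₁ and every function f : [0, √(2n)] → ℝ that is C¹ on [0, √(2n)], C² on (0, √(2n)], satisfies the profile ODE f''(r)/(1 + f'(r)²) = (r − (n−1)/r)·f'(r) − f(r) − λ·√(1 + f'(r)²) on (0, √(2n)], and has f(0) = −λ + ε and f'(0) = 0, there exists r ∈ [√n, √(2n)] with f(r) = −λ. -/

import Mathlib

open Real Set

/-- The profile ODE (2.7): `f''/(1+f'²) = (r - (n-1)/r) f' - f - λ √(1+f'²)` at the point `r`. -/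
def ProfileEq (n : ℕ) (lam : ℝ) (f : ℝ → ℝ) (r : ℝ) : Prop :=
  deriv (deriv f) r / (1 + (deriv f r) ^ 2) =
    (r - ((n : ℝ) - 1) / r) * deriv f r - f r - lam * Real.sqrt (1 + (deriv f r) ^ 2)

/-!
Write `u = f + λ` for the height of the profile above the hyperplane and `p = f'` for its slope. In
terms of the sine `p / √(1 + p²)` of the slope angle the equation is in divergence form with respect
to the weight `r ^ (n - 1) * exp (-r² / 2)`, and up to terms quadratic in the slope it is the
linear equation `u'' - (r - (n - 1) / r) u' + u = 0`. A Grönwall estimate for the energy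
`u² + log (1 + p²)` bounds `u` and `p` by a multiple of `|ε|`, so those quadratic terms are
negligible against `ε`.

Let `ε > 0`. The Wronskian of the solution with the test function `n - r²` grows while `u > 0` and
`r < √n`; since it is nonpositive at a first zero of `u`, there is no such zero on `[0, √n]`. If `u`
stayed positive up to `√(2n)`, the Wronskian with `r² - 2n` would grow on the whole interval, but it
is negative at `√(2n)`. The case `ε < 0` follows by reflecting `u` and `λ`.
-/

/-! ### Calculus on an interval -/

lemma add_mul_sub_le_of_le_hasDerivAt {g g' : ℝ → ℝ} {a b c : ℝ} (hab : a ≤ b)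
    (hg : ContinuousOn g (Icc a b)) (hg' : ∀ r ∈ Ioo a b, HasDerivAt g (g' r) r)
    (hc : ∀ r ∈ Ioo a b, c ≤ g' r) : g a + c * (b - a) ≤ g b := by
  rcases hab.eq_or_lt with rfl | hlt
  · simp
  · obtain ⟨r, hr, hslope⟩ := exists_hasDerivAt_eq_slope g g' hlt hg hg'
    have hle := hc r hr
    rw [hslope, le_div_iff₀ (sub_pos.2 hlt)] at hle
    linarith

lemma add_mul_sub_mul_le_of_le_hasDerivAt {g g' : ℝ → ℝ} {a b c d A B : ℝ} (hac : a ≤ c)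
    (hcd : c ≤ d) (hdb : d ≤ b) (hg : ContinuousOn g (Icc a b))
    (hg' : ∀ r ∈ Ioo a b, HasDerivAt g (g' r) r) (hB : ∀ r ∈ Ioo a b, -B ≤ g' r)
    (hA : ∀ r ∈ Ioo c d, A - B ≤ g' r) : g a + A * (d - c) - B * (b - a) ≤ g b := by
  have piece {x y C : ℝ} (hax : a ≤ x) (hxy : x ≤ y) (hyb : y ≤ b)
      (hC : ∀ r ∈ Ioo x y, C ≤ g' r) : g x + C * (y - x) ≤ g y :=
    add_mul_sub_le_of_le_hasDerivAt hxy (hg.mono (Icc_subset_Icc hax hyb))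
      (fun r hr => hg' r (Ioo_subset_Ioo hax hyb hr)) hC
  have left := piece le_rfl hac (hcd.trans hdb)
    fun r hr => hB r (Ioo_subset_Ioo_right (hcd.trans hdb) hr)
  have middle := piece hac hcd hdb hA
  have right := piece (hac.trans hcd) hdb le_rfl
    fun r hr => hB r (Ioo_subset_Ioo_left (hac.trans hcd) hr)
  linarith

/- Unlike Mathlib's Grönwall inequalities, this one asks for no derivative at the left endpoint,
where the profile equation is singular. -/
lemma le_mul_exp_of_hasDerivAt_le {g g' : ℝ → ℝ} {a b C : ℝ} (hab : a ≤ b)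
    (hg : ContinuousOn g (Icc a b)) (hg' : ∀ r ∈ Ioo a b, HasDerivAt g (g' r) r)
    (hC : ∀ r ∈ Ioo a b, g' r ≤ C * g r) : g b ≤ g a * exp (C * (b - a)) := by
  have hexp (r : ℝ) : HasDerivAt (fun r => exp (-(C * r))) (exp (-(C * r)) * -C) r := by
    simpa using ((hasDerivAt_id r).const_mul C).neg.exp
  have hdecay := add_mul_sub_le_of_le_hasDerivAt (g := fun r => -(g r * exp (-(C * r)))) (c := 0)
    hab (by fun_prop) (fun r hr => ((hg' r hr).mul (hexp r)).neg) fun r hr => by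
      nlinarith [hC r hr, exp_pos (-(C * r))]
  calc g b = g b * exp (-(C * b)) * exp (C * b) := by
        rw [mul_assoc, ← exp_add, neg_add_cancel, exp_zero, mul_one]
    _ ≤ g a * exp (-(C * a)) * exp (C * b) := by gcongr ?_ * _; linarith
    _ = g a * exp (C * (b - a)) := by rw [mul_assoc, ← exp_add]; ring_nf

lemma pos_on_Icc_of_forall_Ico {g : ℝ → ℝ} {a b : ℝ} (hg : ContinuousOn g (Icc a b))
    (hstep : ∀ t ∈ Icc a b, (∀ r ∈ Ico a t, 0 < g r) → 0 < g t) : ∀ t ∈ Icc a b, 0 < g t := by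
  by_contra! hneg
  obtain ⟨s, hs, hgs⟩ := hneg
  have hcompact : IsCompact (Icc a b ∩ g ⁻¹' Iic 0) :=
    isCompact_Icc.of_isClosed_subset (hg.preimage_isClosed_of_isClosed isClosed_Icc isClosed_Iic)
      inter_subset_left
  obtain ⟨t, ⟨ht, hgt⟩, hfirst⟩ := hcompact.exists_isLeast ⟨s, hs, hgs⟩
  refine (hstep t ht fun r hr => ?_).not_ge hgt
  by_contra! hgr
  exact (hfirst ⟨⟨hr.1, hr.2.le.trans ht.2⟩, hgr⟩).not_gt hr.2

lemma nonpos_of_hasDerivAt_of_isMinOn_Icc_right {g : ℝ → ℝ} {a b g' : ℝ} (hab : a < b)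
    (hg : HasDerivAt g g' b) (hmin : IsMinOn g (Icc a b) b) : g' ≤ 0 := by
  have hcone : a - b ∈ posTangentConeAt (Icc a b) b :=
    sub_mem_posTangentConeAt_of_segment_subset (by rw [segment_symm, segment_eq_Icc hab.le])
  have hdir : 0 ≤ (a - b) * g' := by
    simpa using hmin.localize.hasFDerivWithinAt_nonneg hg.hasFDerivAt.hasFDerivWithinAt hcone
  exact nonpos_of_mul_nonneg_right hdir (sub_neg.2 hab)

lemma abs_sqrt_one_add_sq_sub_one_le (x : ℝ) : |√(1 + x ^ 2) - 1| ≤ x ^ 2 / 2 := by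
  have hone : 1 ≤ √(1 + x ^ 2) := one_le_sqrt.2 (by nlinarith [sq_nonneg x])
  rw [abs_of_nonneg (sub_nonneg.2 hone)]
  linarith [Real.sqrt_one_add_le (x := x ^ 2) (by nlinarith [sq_nonneg x])]

lemma le_two_mul_log_one_add {x : ℝ} (h0 : 0 ≤ x) (h1 : x ≤ 1) : x ≤ 2 * log (1 + x) := by
  calc x ≤ 2 * (2 * x / (x + 2)) := by
        rw [mul_div_assoc', le_div_iff₀ (by positivity)]; nlinarith
    _ ≤ 2 * log (1 + x) := by gcongr; exact le_log_one_add_of_nonneg h0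

lemma one_sub_cos_arctan_nonneg (x : ℝ) : 0 ≤ 1 - cos (arctan x) :=
  sub_nonneg.2 (cos_le_one _)

lemma one_sub_cos_arctan_le_sq (x : ℝ) : 1 - cos (arctan x) ≤ x ^ 2 := by
  have hcos : 1 - cos (arctan x) ^ 2 = sin (arctan x) ^ 2 := by rw [sin_sq]
  have hsin : sin (arctan x) ^ 2 ≤ x ^ 2 := by
    rw [sin_arctan, div_pow, sq_sqrt (by positivity)]
    exact div_le_self (sq_nonneg x) (by nlinarith [sq_nonneg x])
  nlinarith [cos_arctan_pos x, cos_le_one (arctan x)]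

/-! ### The shifted profile equation -/

/-- Solutions of the profile equation (2.7) on `[0, R]` in real dimension `d`, as a first-order
system for the height `u = f + λ` above the hyperplane and its slope `p = f'`. Only continuity is
asked for at the singular endpoint `r = 0`. -/
structure IsShiftedProfile (d lam R : ℝ) (u p : ℝ → ℝ) : Prop where
  continuousOn_height : ContinuousOn u (Icc 0 R)
  continuousOn_slope : ContinuousOn p (Icc 0 R)
  hasDerivAt_height : ∀ r ∈ Ioo 0 R, HasDerivAt u (p r) r
  hasDerivAt_slope : ∀ r ∈ Ioo 0 R, HasDerivAt p
    ((1 + p r ^ 2) * ((r - (d - 1) / r) * p r - u r + lam * (1 - √(1 + p r ^ 2)))) r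

lemma isShiftedProfile_of_profileEq {n : ℕ} {lam R : ℝ} {f : ℝ → ℝ} (hR : 0 < R)
    (hf₁ : ContDiffOn ℝ 1 f (Icc 0 R)) (hf₂ : ContDiffOn ℝ 2 f (Ioo 0 R))
    (hode : ∀ r ∈ Ioo 0 R, ProfileEq n lam f r) :
    IsShiftedProfile n lam R (fun r => f r + lam) (derivWithin f (Icc 0 R)) where
  continuousOn_height := hf₁.continuousOn.add continuousOn_const
  continuousOn_slope := hf₁.continuousOn_derivWithin (uniqueDiffOn_Icc hR) le_rfl
  hasDerivAt_height r hr := by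
    have hnhds := Icc_mem_nhds hr.1 hr.2
    rw [derivWithin_of_mem_nhds hnhds]
    exact ((hf₁.differentiableOn one_ne_zero).differentiableAt hnhds).hasDerivAt.add_const lam
  hasDerivAt_slope r hr := by
    have heq : EqOn (derivWithin f (Icc 0 R)) (deriv f) (Ioo 0 R) := fun x hx =>
      derivWithin_of_mem_nhds (Icc_mem_nhds hx.1 hx.2)
    have hderiv : ContDiffOn ℝ 1 (deriv f) (Ioo 0 R) :=
      hf₂.deriv_of_isOpen isOpen_Ioo (by norm_num)
    have hnhds := Ioo_mem_nhds hr.1 hr.2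
    have hr_ode := hode r hr
    rw [ProfileEq, div_eq_iff (by positivity)] at hr_ode
    refine (((hderiv.differentiableOn one_ne_zero).differentiableAt hnhds).hasDerivAt
      |>.congr_of_eventuallyEq (heq.eventuallyEq_of_mem hnhds)).congr_deriv ?_
    rw [heq hr, hr_ode]
    ring

/-- The density `r ^ (d - 1) * exp (-r² / 2)`, the integrating factor of the linearised profile
operator `u'' - (r - (d - 1) / r) u'`. -/
noncomputable def gaussianWeight (d r : ℝ) : ℝ := r ^ (d - 1) * exp (-(r ^ 2 / 2))

lemma continuous_gaussianWeight {d : ℝ} (hd : 1 ≤ d) : Continuous (gaussianWeight d) :=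
  (continuous_rpow_const (sub_nonneg.2 hd)).mul (by fun_prop)

lemma gaussianWeight_nonneg {d r : ℝ} (hr : 0 ≤ r) : 0 ≤ gaussianWeight d r := by
  unfold gaussianWeight; positivity

lemma gaussianWeight_pos {d r : ℝ} (hr : 0 < r) : 0 < gaussianWeight d r := by
  unfold gaussianWeight; positivity

lemma gaussianWeight_le_rpow {d r s : ℝ} (hd : 1 ≤ d) (hr : 0 ≤ r) (hrs : r ≤ s) :
    gaussianWeight d r ≤ s ^ (d - 1) := by
  calc r ^ (d - 1) * exp (-(r ^ 2 / 2)) ≤ r ^ (d - 1) * 1 := by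
        gcongr; exact exp_le_one_iff.2 (neg_nonpos.2 (by positivity))
    _ = r ^ (d - 1) := mul_one _
    _ ≤ s ^ (d - 1) := rpow_le_rpow hr hrs (sub_nonneg.2 hd)

lemma hasDerivAt_gaussianWeight {d r : ℝ} (hr : 0 < r) :
    HasDerivAt (gaussianWeight d) (((d - 1) / r - r) * gaussianWeight d r) r := by
  have hexp : HasDerivAt (fun r : ℝ => exp (-(r ^ 2 / 2))) (exp (-(r ^ 2 / 2)) * -r) r := by
    simpa using ((hasDerivAt_pow 2 r).div_const 2).neg.exp
  refine ((hasDerivAt_rpow_const (Or.inl hr.ne')).mul hexp).congr_deriv ?_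
  rw [gaussianWeight, rpow_sub_one hr.ne' (d - 1)]
  ring

/-- The weighted Wronskian of a profile with height `u` and slope `p` and the test function
`α - β r²`. The slope enters through the sine of its angle, `sin (arctan p) = p / √(1 + p²)`, which
puts the profile equation into divergence form. -/
noncomputable def profileWronskian (d α β : ℝ) (u p : ℝ → ℝ) (r : ℝ) : ℝ :=
  gaussianWeight d r * ((α - β * r ^ 2) * sin (arctan (p r)) + 2 * β * r * u r)

namespace IsShiftedProfile

variable {d lam R : ℝ} {u p : ℝ → ℝ}

protected lemma neg (h : IsShiftedProfile d lam R u p) : IsShiftedProfile d (-lam) R (-u) (-p) where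
  continuousOn_height := h.continuousOn_height.neg
  continuousOn_slope := h.continuousOn_slope.neg
  hasDerivAt_height r hr := (h.hasDerivAt_height r hr).neg
  hasDerivAt_slope r hr := (h.hasDerivAt_slope r hr).neg.congr_deriv <| by
    simp only [Pi.neg_apply, neg_sq]
    ring

lemma continuousOn_profileWronskian (h : IsShiftedProfile d lam R u p) (hd : 1 ≤ d) (α β : ℝ) :
    ContinuousOn (profileWronskian d α β u p) (Icc 0 R) := by
  have hu := h.continuousOn_height
  have hp := h.continuousOn_slope
  have hρ := continuous_gaussianWeight hd
  unfold profileWronskian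
  fun_prop

lemma hasDerivAt_sin_arctan_slope (h : IsShiftedProfile d lam R u p) {r : ℝ} (hr : r ∈ Ioo 0 R) :
    HasDerivAt (fun r => sin (arctan (p r)))
      ((r - (d - 1) / r) * sin (arctan (p r)) - cos (arctan (p r)) * u r
        - lam * (1 - cos (arctan (p r)))) r := by
  refine (h.hasDerivAt_slope r hr).arctan.sin.congr_deriv ?_
  rw [sin_arctan, cos_arctan]
  field_simp
  ring

lemma hasDerivAt_profileWronskian (h : IsShiftedProfile d lam R u p) (α β : ℝ) {r : ℝ}
    (hr : r ∈ Ioo 0 R) :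
    HasDerivAt (profileWronskian d α β u p)
      (gaussianWeight d r * (u r * (β * (2 * d - r ^ 2) - α) + (1 - cos (arctan (p r))) *
        ((α - β * r ^ 2) * (u r - lam) + 2 * β * r * p r))) r := by
  have hr₀ : r ≠ 0 := hr.1.ne'
  have htest : HasDerivAt (fun r => α - β * r ^ 2) (-(β * (2 * r))) r := by
    simpa using ((hasDerivAt_pow 2 r).const_mul β).const_sub α
  have hlin : HasDerivAt (fun r => 2 * β * r) (2 * β) r := by
    simpa using (hasDerivAt_id r).const_mul (2 * β)
  have hsin : sin (arctan (p r)) = p r * cos (arctan (p r)) := by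
    rw [sin_arctan, cos_arctan]; ring
  refine ((hasDerivAt_gaussianWeight hr.1).mul ((htest.mul (h.hasDerivAt_sin_arctan_slope hr)).add
    (hlin.mul (h.hasDerivAt_height r hr)))).congr_deriv ?_
  simp only [Pi.add_apply, Pi.mul_apply, hsin]
  field_simp
  ring

/-! ### Smallness of the profile -/

/- The weight vanishes at `0`, so the divergence form bounds
`gaussianWeight d r * sin (arctan (p r))` by a multiple of `r ^ d`, one power of `r` more than the
weight itself. -/
lemma abs_sin_arctan_slope_le (h : IsShiftedProfile d lam R u p) (hd : 1 < d) {U r : ℝ}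
    (hU : ∀ x ∈ Ioo 0 R, |u x| ≤ U) (hr : r ∈ Ioo 0 R) :
    |sin (arctan (p r))| ≤ (U + |lam|) * r * exp (r ^ 2 / 2) := by
  have hW₀ : profileWronskian d 1 0 u p 0 = 0 := by
    simp [profileWronskian, gaussianWeight, zero_rpow (sub_pos.2 hd).ne']
  obtain ⟨c, hc, hslope⟩ := exists_hasDerivAt_eq_slope _ _ hr.1
    ((h.continuousOn_profileWronskian hd.le 1 0).mono (Icc_subset_Icc_right hr.2.le))
    fun x hx => h.hasDerivAt_profileWronskian 1 0 (Ioo_subset_Ioo_right hr.2.le hx)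
  rw [hW₀, sub_zero, sub_zero, eq_div_iff hr.1.ne'] at hslope
  have hflux : |u c * (0 * (2 * d - c ^ 2) - 1) + (1 - cos (arctan (p c))) *
      ((1 - 0 * c ^ 2) * (u c - lam) + 2 * 0 * c * p c)| ≤ U + |lam| := by
    have hcos₀ := cos_arctan_pos (p c)
    have hcos₁ := one_sub_cos_arctan_nonneg (p c)
    calc _ = |cos (arctan (p c)) * u c + (1 - cos (arctan (p c))) * lam| := by
          rw [← abs_neg]; ring_nf
      _ ≤ cos (arctan (p c)) * |u c| + (1 - cos (arctan (p c))) * |lam| := by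
          refine (abs_add_le _ _).trans_eq ?_
          rw [abs_mul, abs_mul, abs_of_pos hcos₀, abs_of_nonneg hcos₁]
      _ ≤ 1 * U + 1 * |lam| := by
          gcongr
          · exact cos_le_one _
          · exact hU c ⟨hc.1, hc.2.trans hr.2⟩
          · linarith
      _ = U + |lam| := by ring
  have hle : r ^ (d - 1) * exp (-(r ^ 2 / 2)) * |sin (arctan (p r))|
      ≤ r ^ (d - 1) * (U + |lam|) * r := by
    calc _ = |profileWronskian d 1 0 u p r| := by
          simp [profileWronskian, gaussianWeight, abs_mul, abs_of_pos (rpow_pos_of_pos hr.1 _)]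
      _ = gaussianWeight d c * _ * r := by
          rw [← hslope, abs_mul, abs_mul, abs_of_pos hr.1,
            abs_of_nonneg (gaussianWeight_nonneg hc.1.le)]
      _ ≤ r ^ (d - 1) * (U + |lam|) * r := by
          have hr₀ := hr.1.le
          gcongr
          exact gaussianWeight_le_rpow hd.le hc.1.le hc.2.le
  rw [exp_neg, mul_assoc, mul_assoc, mul_le_mul_iff_right₀ (rpow_pos_of_pos hr.1 _),
    inv_mul_le_iff₀ (exp_pos _)] at hle
  linarith

lemma slope_zero_eq_zero (h : IsShiftedProfile d lam R u p) (hd : 1 < d) (hR : 0 < R) :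
    p 0 = 0 := by
  obtain ⟨U, hU⟩ := isCompact_Icc.exists_bound_of_continuousOn h.continuousOn_height
  have hmem : (0 : ℝ) ∈ closure (Ioo 0 R) := by
    rw [closure_Ioo hR.ne]; exact left_mem_Icc.2 hR.le
  have hp : ContinuousWithinAt p (Ioo 0 R) 0 :=
    (h.continuousOn_slope 0 (left_mem_Icc.2 hR.le)).mono Ioo_subset_Icc_self
  have hsin : |sin (arctan (p 0))| ≤ (U + |lam|) * 0 * exp (0 ^ 2 / 2) :=
    ContinuousWithinAt.closure_le hmem (by fun_prop) (by fun_prop) fun r hr =>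
      h.abs_sin_arctan_slope_le hd (fun x hx => hU x (Ioo_subset_Icc_self hx)) hr
  simpa using hsin

/- `log (1 + p²)` is chosen so that its derivative cancels the term `2 u p` exactly, which leaves
only terms of order `p²`. -/
lemma hasDerivAt_energy (h : IsShiftedProfile d lam R u p) {r : ℝ} (hr : r ∈ Ioo 0 R) :
    HasDerivAt (fun r => u r ^ 2 + log (1 + p r ^ 2))
      (2 * (r - (d - 1) / r) * p r ^ 2 + 2 * lam * p r * (1 - √(1 + p r ^ 2))) r := by
  refine (((h.hasDerivAt_height r hr).pow 2).add
    ((((h.hasDerivAt_slope r hr).pow 2).const_add 1).log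
      (show (1 : ℝ) + p r ^ 2 ≠ 0 by positivity))).congr_deriv ?_
  simp only [Pi.pow_apply]
  field_simp
  ring

lemma energy_le (h : IsShiftedProfile d lam R u p) (hd : 1 ≤ d) (hp₀ : p 0 = 0) {t : ℝ}
    (ht : t ∈ Icc 0 R) (hp : ∀ r ∈ Ioo 0 t, |p r| ≤ 1) :
    u t ^ 2 + log (1 + p t ^ 2) ≤ u 0 ^ 2 * exp ((4 * R + 2 * |lam|) * R) := by
  have hR : 0 ≤ R := ht.1.trans ht.2
  have hu := h.continuousOn_height.mono (Icc_subset_Icc_right ht.2)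
  have hpc := h.continuousOn_slope.mono (Icc_subset_Icc_right ht.2)
  have hgrowth := le_mul_exp_of_hasDerivAt_le (C := 4 * R + 2 * |lam|) ht.1
    ((hu.pow 2).add ((continuousOn_const.add (hpc.pow 2)).log fun r _ =>
      show (1 : ℝ) + p r ^ 2 ≠ 0 by positivity))
    (fun r hr => h.hasDerivAt_energy (Ioo_subset_Ioo_right ht.2 hr)) fun r hr => by
      have hp1 := hp r hr
      have hp_sq : p r ^ 2 ≤ 1 := (sq_le_one_iff_abs_le_one _).2 hp1
      have hdamp : 0 ≤ (d - 1) / r * p r ^ 2 :=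
        mul_nonneg (div_nonneg (sub_nonneg.2 hd) hr.1.le) (sq_nonneg _)
      have hforce : lam * p r * (1 - √(1 + p r ^ 2)) ≤ |lam| * 1 * (p r ^ 2 / 2) := by
        refine (le_abs_self _).trans ?_
        rw [abs_mul, abs_mul, abs_sub_comm]
        gcongr
        exact abs_sqrt_one_add_sq_sub_one_le _
      calc _ ≤ 2 * r * p r ^ 2 + |lam| * p r ^ 2 := by linarith
        _ ≤ 2 * R * p r ^ 2 + |lam| * p r ^ 2 := by gcongr; exact (hr.2.trans_le ht.2).le
        _ = (2 * R + |lam|) * p r ^ 2 := by ring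
        _ ≤ (2 * R + |lam|) * (2 * u r ^ 2 + 2 * log (1 + p r ^ 2)) := by
            gcongr
            linarith [le_two_mul_log_one_add (sq_nonneg (p r)) hp_sq, sq_nonneg (u r)]
        _ = _ := by simp only [Pi.pow_apply, Pi.add_apply]; ring
  simp only [hp₀, sub_zero, Pi.pow_apply, Pi.add_apply] at hgrowth
  calc _ ≤ u 0 ^ 2 * exp ((4 * R + 2 * |lam|) * t) := by simpa using hgrowth
    _ ≤ _ := by gcongr; exact ht.2

end IsShiftedProfile

lemma exists_forall_abs_le_mul_abs_height_zero {d R : ℝ} (hd : 1 ≤ d) (hR : 0 ≤ R) (lam : ℝ) :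
    ∃ K > 0, ∀ u p : ℝ → ℝ, IsShiftedProfile d lam R u p → p 0 = 0 → K * |u 0| < 1 →
      ∀ r ∈ Icc 0 R, |u r| ≤ K * |u 0| ∧ |p r| ≤ K * |u 0| := by
  set M := exp ((4 * R + 2 * |lam|) * R)
  have hM1 : 1 ≤ M := one_le_exp (by positivity)
  refine ⟨2 * M, by positivity, fun u p h hp₀ hsmall => ?_⟩
  have hK : 2 * (u 0 ^ 2 * M) ≤ (2 * M * |u 0|) ^ 2 := by
    rw [mul_pow, sq_abs]; nlinarith [mul_nonneg (sq_nonneg (u 0)) (sub_nonneg.2 hM1)]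
  have hK1 : (2 * M * |u 0|) ^ 2 < 1 := (sq_lt_one_iff₀ (by positivity)).2 hsmall
  have hpos : ∀ t ∈ Icc 0 R, 0 < 1 - p t ^ 2 := by
    refine pos_on_Icc_of_forall_Ico (continuousOn_const.sub (h.continuousOn_slope.pow 2))
      fun t ht hbefore => ?_
    have henergy := h.energy_le hd hp₀ ht fun r hr =>
      (sq_le_one_iff_abs_le_one _).1 (sub_pos.1 (hbefore r ⟨hr.1.le, hr.2⟩)).le
    have hlog : log (1 + p t ^ 2) < log 2 := by linarith [log_two_gt_d9, sq_nonneg (u t)]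
    linarith [(log_lt_log_iff (by positivity) two_pos).1 hlog]
  have hp_sq (r : ℝ) (hr : r ∈ Icc 0 R) : p r ^ 2 ≤ 1 := (sub_pos.1 (hpos r hr)).le
  intro r hr
  have henergy := h.energy_le hd hp₀ hr fun x hx =>
    (sq_le_one_iff_abs_le_one _).1 (hp_sq x ⟨hx.1.le, hx.2.le.trans hr.2⟩)
  have hlog := le_two_mul_log_one_add (sq_nonneg (p r)) (hp_sq r hr)
  exact ⟨abs_le_of_sq_le_sq (by nlinarith [sq_nonneg (p r)]) (by positivity),
    abs_le_of_sq_le_sq (by nlinarith [sq_nonneg (u r)]) (by positivity)⟩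

/-! ### Positivity of the Wronskian -/

lemma exists_forall_abs_wronskian_remainder_le {d R : ℝ} (hd : 1 ≤ d) (hR : 0 ≤ R)
    (lam α β : ℝ) : ∃ C ≥ 0, ∀ k ≤ 1, ∀ r ∈ Ioo 0 R, ∀ v q : ℝ, |v| ≤ k → |q| ≤ k →
      |gaussianWeight d r * ((1 - cos (arctan q)) *
        ((α - β * r ^ 2) * (v - lam) + 2 * β * r * q))| ≤ C * k ^ 2 := by
  refine ⟨R ^ (d - 1) * ((|α| + |β| * R ^ 2) * (1 + |lam|) + 2 * |β| * R), by positivity,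
    fun k hk r hr v q hv hq => ?_⟩
  have hr₀ := hr.1.le
  have htest : |(α - β * r ^ 2) * (v - lam) + 2 * β * r * q|
      ≤ (|α| + |β| * R ^ 2) * (1 + |lam|) + 2 * |β| * R := by
    calc _ ≤ |α - β * r ^ 2| * |v - lam| + |2 * β * r * q| := by
          rw [← abs_mul]; exact abs_add_le _ _
      _ ≤ (|α| + |β * r ^ 2|) * (|v| + |lam|) + |2 * β * r * q| := by
          gcongr <;> exact abs_sub _ _
      _ = (|α| + |β| * r ^ 2) * (|v| + |lam|) + 2 * |β| * r * |q| := by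
          simp only [abs_mul, abs_pow, abs_two, abs_of_pos hr.1]
      _ ≤ (|α| + |β| * R ^ 2) * (1 + |lam|) + 2 * |β| * R * 1 := by
          gcongr
          exacts [hr.2.le, hv.trans hk, hr.2.le, hq.trans hk]
      _ = _ := by rw [mul_one]
  have hcos : 1 - cos (arctan q) ≤ k ^ 2 :=
    (one_sub_cos_arctan_le_sq q).trans (sq_le_sq' (abs_le.1 hq).1 (abs_le.1 hq).2)
  have hcos₀ := one_sub_cos_arctan_nonneg q
  calc _ = gaussianWeight d r * ((1 - cos (arctan q)) *
        |(α - β * r ^ 2) * (v - lam) + 2 * β * r * q|) := by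
        rw [abs_mul, abs_mul, abs_of_nonneg (gaussianWeight_nonneg hr₀), abs_of_nonneg hcos₀]
    _ ≤ R ^ (d - 1) * (k ^ 2 * ((|α| + |β| * R ^ 2) * (1 + |lam|) + 2 * |β| * R)) := by
        gcongr
        exact gaussianWeight_le_rpow hd hr₀ hr.2.le
    _ = _ := by ring

namespace IsShiftedProfile

variable {d lam R : ℝ} {u p : ℝ → ℝ}

lemma half_height_zero_le (h : IsShiftedProfile d lam R u p) {K r : ℝ} (hr : r ∈ Icc 0 R)
    (hu₀ : 0 ≤ u 0) (hp : ∀ x ∈ Icc 0 R, |p x| ≤ K * u 0) (hKr : K * r ≤ 1 / 2) :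
    u 0 / 2 ≤ u r := by
  have hgrowth := add_mul_sub_le_of_le_hasDerivAt hr.1
    (h.continuousOn_height.mono (Icc_subset_Icc_right hr.2))
    (fun x hx => h.hasDerivAt_height x (Ioo_subset_Ioo_right hr.2 hx))
    fun x hx => (abs_le.1 (hp x ⟨hx.1.le, hx.2.le.trans hr.2⟩)).1
  linarith [mul_le_mul_of_nonneg_right hKr hu₀]

lemma le_profileWronskian (h : IsShiftedProfile d lam R u p) (hd : 1 ≤ d) (hp₀ : p 0 = 0)
    {α β a b t A B : ℝ} (ha : 0 ≤ a) (hab : a ≤ b) (hbt : b ≤ t) (htR : t ≤ R)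
    (hsign : ∀ r ∈ Ioo 0 t, 0 ≤ u r * (β * (2 * d - r ^ 2) - α))
    (hA : ∀ r ∈ Ioo a b, A ≤ gaussianWeight d r * (u r * (β * (2 * d - r ^ 2) - α)))
    (hB : ∀ r ∈ Ioo 0 t, |gaussianWeight d r * ((1 - cos (arctan (p r))) *
      ((α - β * r ^ 2) * (u r - lam) + 2 * β * r * p r))| ≤ B) :
    A * (b - a) - B * t ≤ profileWronskian d α β u p t := by
  have hW₀ : profileWronskian d α β u p 0 = 0 := by simp [profileWronskian, hp₀]
  have hgrowth := add_mul_sub_mul_le_of_le_hasDerivAt (A := A) (B := B) ha hab hbt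
    ((h.continuousOn_profileWronskian hd α β).mono (Icc_subset_Icc_right htR))
    (fun r hr => h.hasDerivAt_profileWronskian α β (Ioo_subset_Ioo_right htR hr))
    (fun r hr => by
      linarith [mul_nonneg (gaussianWeight_nonneg (d := d) hr.1.le) (hsign r hr),
        (abs_le.1 (hB r hr)).1])
    fun r hr => by linarith [hA r hr, (abs_le.1 (hB r (Ioo_subset_Ioo ha hbt hr))).1]
  linarith

end IsShiftedProfile

lemma exists_forall_profileWronskian_pos {d R η : ℝ} (hd : 1 ≤ d) (hR : 0 < R) (lam : ℝ)
    {α β : ℝ} (hη : 0 < η) (hm : ∀ r ∈ Ioo 0 η, 0 < β * (2 * d - r ^ 2) - α) :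
    ∃ ε₁ > 0, ∃ δ ∈ Ioc 0 R, ∀ u p : ℝ → ℝ, IsShiftedProfile d lam R u p → p 0 = 0 →
      0 < u 0 → u 0 ≤ ε₁ → (∀ r ∈ Icc 0 δ, 0 < u r) ∧
        ∀ t ∈ Icc δ R, (∀ r ∈ Ioo 0 t, 0 ≤ u r * (β * (2 * d - r ^ 2) - α)) →
          0 < profileWronskian d α β u p t := by
  obtain ⟨K, hK, hsmall⟩ := exists_forall_abs_le_mul_abs_height_zero hd hR.le lam
  obtain ⟨C, hC, hremainder⟩ := exists_forall_abs_wronskian_remainder_le hd hR.le lam α β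
  obtain ⟨δ, hδ, hδ_lt⟩ := exists_between (lt_min hη (lt_min hR (by positivity : 0 < 1 / (2 * K))))
  simp only [lt_min_iff, lt_div_iff₀ (by positivity : 0 < 2 * K)] at hδ_lt
  obtain ⟨hδη, hδR, hδK⟩ := hδ_lt
  have hρ := continuous_gaussianWeight hd
  obtain ⟨μ, hμ, hμ_le⟩ := isCompact_Icc.exists_forall_le' (s := Icc (δ / 2) δ) (a := 0)
    (f := fun r => gaussianWeight d r * (β * (2 * d - r ^ 2) - α)) (by fun_prop) fun r hr =>
      have hr₀ : 0 < r := (half_pos hδ).trans_le hr.1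
      mul_pos (gaussianWeight_pos hr₀) (hm r ⟨hr₀, hr.2.trans_lt hδη⟩)
  -- The Wronskian gains at least `μ * (u 0 / 2) * (δ / 2)` on `[δ / 2, δ]` and loses at most
  -- `C * (K * u 0) ^ 2 * R` on `[0, R]`; the second bound below makes the gain win.
  refine ⟨min (1 / (2 * K)) (μ * δ / (8 * (C * K ^ 2 * R + 1))), by positivity, δ,
    ⟨hδ, hδR.le⟩, fun u p h hp₀ hu₀ hu₀_le => ?_⟩
  rw [le_min_iff, le_div_iff₀ (by positivity), le_div_iff₀ (by positivity)] at hu₀_le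
  have hbounds := hsmall u p h hp₀ (by rw [abs_of_pos hu₀]; linarith)
  rw [abs_of_pos hu₀] at hbounds
  have hhalf (r : ℝ) (hr : r ∈ Icc 0 δ) : u 0 / 2 ≤ u r :=
    h.half_height_zero_le ⟨hr.1, hr.2.trans hδR.le⟩ hu₀.le (fun x hx => (hbounds x hx).2)
      (by nlinarith [hr.2])
  refine ⟨fun r hr => (half_pos hu₀).trans_le (hhalf r hr), fun t ht hsign => ?_⟩
  have hW := h.le_profileWronskian hd hp₀ (half_pos hδ).le (half_le_self hδ.le) ht.1 ht.2 hsign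
    (A := μ * (u 0 / 2)) (B := C * (K * u 0) ^ 2)
    (fun r hr => by
      have hr' := hμ_le r (Ioo_subset_Icc_self hr)
      nlinarith [hhalf r ⟨(half_pos hδ).le.trans hr.1.le, hr.2.le⟩])
    fun r hr =>
      have hr' := hbounds r ⟨hr.1.le, hr.2.le.trans ht.2⟩
      hremainder _ (by linarith) r ⟨hr.1, hr.2.trans_le ht.2⟩ _ _ hr'.1 hr'.2
  have hgain : C * (K * u 0) ^ 2 * t < μ * (u 0 / 2) * (δ - δ / 2) := by
    calc C * (K * u 0) ^ 2 * t ≤ C * (K * u 0) ^ 2 * R := by gcongr; exact ht.2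
      _ = u 0 * (u 0 * (C * K ^ 2 * R)) := by ring
      _ < u 0 * (μ * δ / 4) := by gcongr; nlinarith [mul_pos hμ hδ]
      _ = μ * (u 0 / 2) * (δ - δ / 2) := by ring
  linarith

/-! ### Zeros of the height -/

lemma exists_forall_height_pos {d R : ℝ} (hd : 1 ≤ d) (hdR : √d < R) (lam : ℝ) :
    ∃ ε₁ > 0, ∀ u p : ℝ → ℝ, IsShiftedProfile d lam R u p → p 0 = 0 → 0 < u 0 → u 0 ≤ ε₁ →
      ∀ r ∈ Icc 0 √d, 0 < u r := by
  have hd₀ : 0 < √d := sqrt_pos.2 (zero_lt_one.trans_le hd)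
  have hsq_lt {r : ℝ} (hr : r ∈ Ioo 0 √d) : r ^ 2 < d := (lt_sqrt hr.1.le).1 hr.2
  obtain ⟨ε₁, hε₁, δ, hδ, hpos⟩ := exists_forall_profileWronskian_pos (η := √d) (α := d) (β := 1)
    hd (hd₀.trans hdR) lam hd₀ fun r hr => by linarith [hsq_lt hr]
  refine ⟨ε₁, hε₁, fun u p h hp₀ hu₀ hu₀_le => ?_⟩
  obtain ⟨hu_pos, hW_pos⟩ := hpos u p h hp₀ hu₀ hu₀_le
  refine pos_on_Icc_of_forall_Ico (h.continuousOn_height.mono (Icc_subset_Icc_right hdR.le))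
    fun t ht hbefore => ?_
  rcases le_or_gt t δ with htδ | hδt
  · exact hu_pos t ⟨ht.1, htδ⟩
  by_contra! hut
  have ht₀ : 0 < t := hδ.1.trans hδt
  have hW := hW_pos t ⟨hδt.le, ht.2.trans hdR.le⟩ fun r hr =>
    mul_nonneg (hbefore r ⟨hr.1.le, hr.2⟩).le
      (by linarith [hsq_lt ⟨hr.1, hr.2.trans_le ht.2⟩])
  have hpt : 0 < p t := by
    by_contra! hpt
    have hsin : sin (arctan (p t)) ≤ 0 := sin_arctan_le_zero.2 hpt
    have htest : 0 ≤ d - 1 * t ^ 2 := by linarith [(le_sqrt' ht₀).1 ht.2]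
    have hboundary : 2 * 1 * t * u t ≤ 0 := mul_nonpos_of_nonneg_of_nonpos (by positivity) hut
    exact hW.not_ge <| mul_nonpos_of_nonneg_of_nonpos (gaussianWeight_nonneg ht₀.le) <|
      add_nonpos (mul_nonpos_of_nonneg_of_nonpos htest hsin) hboundary
  have hmin : IsMinOn u (Icc 0 t) t := isMinOn_iff.2 fun r hr => by
    rcases hr.2.eq_or_lt with rfl | hrt
    · exact le_rfl
    · exact hut.trans (hbefore r ⟨hr.1, hrt⟩).le
  exact hpt.not_ge <| nonpos_of_hasDerivAt_of_isMinOn_Icc_right ht₀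
    (h.hasDerivAt_height t ⟨ht₀, ht.2.trans_lt hdR⟩) hmin

lemma exists_forall_exists_height_eq_zero {d : ℝ} (hd : 1 ≤ d) (lam : ℝ) :
    ∃ ε₁ > 0, ∀ u p : ℝ → ℝ, IsShiftedProfile d lam √(2 * d) u p → p 0 = 0 → 0 < u 0 →
      u 0 ≤ ε₁ → ∃ r ∈ Icc √d √(2 * d), u r = 0 := by
  have hd₀ : 0 < d := zero_lt_one.trans_le hd
  have hR : 0 < √(2 * d) := by positivity
  have hdR : √d < √(2 * d) := sqrt_lt_sqrt hd₀.le (by linarith)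
  obtain ⟨ε₁, hε₁, hpos⟩ := exists_forall_height_pos hd hdR lam
  obtain ⟨ε₂, hε₂, δ, hδ, hW⟩ := exists_forall_profileWronskian_pos (α := -(2 * d)) (β := -1)
    hd hR lam hR fun r hr => by linarith [pow_pos hr.1 2]
  refine ⟨min ε₁ ε₂, lt_min hε₁ hε₂, fun u p h hp₀ hu₀ hu₀_le => ?_⟩
  have hu_left := hpos u p h hp₀ hu₀ (hu₀_le.trans (min_le_left _ _))
  by_contra! hne
  have hu_right : ∀ r ∈ Icc √d √(2 * d), 0 < u r := by
    intro r hr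
    by_contra! hur
    obtain ⟨s, hs, hus⟩ := intermediate_value_Icc' hr.1
      (h.continuousOn_height.mono (Icc_subset_Icc (sqrt_nonneg d) hr.2))
      ⟨hur, (hu_left √d (right_mem_Icc.2 (sqrt_nonneg d))).le⟩
    exact hne s (Icc_subset_Icc_right hr.2 hs) hus
  have hu (r : ℝ) (hr : r ∈ Icc 0 √(2 * d)) : 0 < u r :=
    (le_total r √d).elim (fun hrd => hu_left r ⟨hr.1, hrd⟩) fun hdr => hu_right r ⟨hdr, hr.2⟩
  have hW_pos := (hW u p h hp₀ hu₀ (hu₀_le.trans (min_le_right _ _))).2 √(2 * d)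
    ⟨hδ.2, le_rfl⟩ fun r hr =>
      mul_nonneg (hu r (Ioo_subset_Icc_self hr)).le (by linarith [sq_nonneg r])
  have hW_neg : profileWronskian d (-(2 * d)) (-1) u p √(2 * d)
      = -(gaussianWeight d √(2 * d) * (2 * √(2 * d) * u √(2 * d))) := by
    rw [profileWronskian, sq_sqrt (by positivity)]
    ring
  have hu_end := hu √(2 * d) (right_mem_Icc.2 hR.le)
  have hW_end := mul_pos (gaussianWeight_pos (d := d) hR)
    (by positivity : 0 < 2 * √(2 * d) * u √(2 * d))
  linarith

theorem crossing_hyperplane_level_general {d : ℝ} (hd : 1 < d) (lam : ℝ) :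
    ∃ ε₁ > 0, ∀ u p : ℝ → ℝ, IsShiftedProfile d lam √(2 * d) u p → 0 < |u 0| → |u 0| ≤ ε₁ →
      ∃ r ∈ Icc √d √(2 * d), u r = 0 := by
  obtain ⟨ε₁, hε₁, habove⟩ := exists_forall_exists_height_eq_zero hd.le lam
  obtain ⟨ε₂, hε₂, hbelow⟩ := exists_forall_exists_height_eq_zero hd.le (-lam)
  refine ⟨min ε₁ ε₂, lt_min hε₁ hε₂, fun u p h hne hsmall => ?_⟩
  have hp₀ := h.slope_zero_eq_zero hd (sqrt_pos.2 (by linarith))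
  rcases lt_or_gt_of_ne (abs_pos.1 hne) with hneg | hpos
  · rw [abs_of_neg hneg] at hsmall
    simpa using hbelow (-u) (-p) h.neg (by simpa) (by simpa) (hsmall.trans (min_le_right _ _))
  · rw [abs_of_pos hpos] at hsmall
    exact habove u p h hp₀ hpos (hsmall.trans (min_le_left _ _))

/-- Lemma 3.2: every solution of the profile ODE starting at `f(0) = -λ + ε` with `ε ≠ 0`
small enough crosses the hyperplane level `-λ` somewhere in `[√n, √(2n)]`. -/
theorem crossing_hyperplane_level
    (n : ℕ) (hn : 2 ≤ n) (lam : ℝ) :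
    ∃ ε₁ > (0 : ℝ), ∀ ε : ℝ, 0 < |ε| → |ε| ≤ ε₁ →
      ∀ f : ℝ → ℝ,
        ContDiffOn ℝ 1 f (Icc 0 (Real.sqrt (2 * n))) →
        ContDiffOn ℝ 2 f (Ioc 0 (Real.sqrt (2 * n))) →
        (∀ r ∈ Ioc (0 : ℝ) (Real.sqrt (2 * n)), ProfileEq n lam f r) →
        f 0 = -lam + ε → deriv f 0 = 0 →
        ∃ r ∈ Icc (Real.sqrt n) (Real.sqrt (2 * n)), f r = -lam := by
  obtain ⟨ε₁, hε₁, hcross⟩ :=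
    crossing_hyperplane_level_general (d := n) (by exact_mod_cast hn) lam
  refine ⟨ε₁, hε₁, fun ε hε hε_le f hf₁ hf₂ hode hf₀ _ => ?_⟩
  have h := isShiftedProfile_of_profileEq (sqrt_pos.2 (by positivity)) hf₁
    (hf₂.mono Ioo_subset_Ioc_self) fun r hr => hode r (Ioo_subset_Ioc_self hr)
  simpa [hf₀, eq_neg_iff_add_eq_zero] using hcross _ _ h (by simpa [hf₀] using hε) (by simpa [hf₀])
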